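/- Let k ≥ 1 and let G = (A, B, E) be a connected bipartite graph all of whose twin classes have size at most k, and suppose G has a twin-adapted A-partitioning cover of cost at most k. Then G has at most 4k^4 twin classes contained in B. -/

import Mathlib

/- Common framework: bipartite graphs on vertex set `ℕ` with side labels,
   edge editions, vertex splittings, and the bicluster-editing numbers. -/

namespace BCE

/-- A graph on a finite subset of `ℕ` equipped with a labelling of its
vertices into two sides `A` and `B`. -/
structure BGraph where
  A : Set ℕ
  B : Set ℕ
  finA : A.Finite
  finB : B.Finite
  Adj : ℕ → ℕ → Prop
  symm : ∀ u v, Adj u v → Adj v u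

/-- The vertex set of a graph. -/
def verts (G : BGraph) : Set ℕ := G.A ∪ G.B

/-- The open neighbourhood of a vertex. -/
def nbhd (G : BGraph) (v : ℕ) : Set ℕ := {u | G.Adj v u}

/-- `G = (A, B, E)` is bipartite: the sides are disjoint and every edge joins
a vertex of `A` with a vertex of `B`. -/
def Bipartite (G : BGraph) : Prop :=
  Disjoint G.A G.B ∧
    ∀ u v, G.Adj u v → (u ∈ G.A ∧ v ∈ G.B) ∨ (u ∈ G.B ∧ v ∈ G.A)

/-- A (bipartite) graph is a disjoint union of bicliques iff whenever
`a-b-c-d` is a walk, `a` and `d` are adjacent (equivalently, every connected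
component is a complete bipartite graph). -/
def IsBicliqueUnion (G : BGraph) : Prop :=
  ∀ a b c d, G.Adj a b → G.Adj b c → G.Adj c d → G.Adj a d

/-- The editing operations: deletion of an edge, addition of an edge, and
splitting of a vertex `v` into `v` and a fresh vertex `v'` whose
neighbourhoods `N1`, `N2` cover the neighbourhood of `v`. -/
inductive Op where
  | del : ℕ → ℕ → Op
  | add : ℕ → ℕ → Op
  | split : ℕ → ℕ → Set ℕ → Set ℕ → Op

/-- `op` is a vertex splitting. -/
def IsSplitOp : Op → Prop
  | Op.split _ _ _ _ => True
  | _ => False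

/-- `OpStep sA sB op G G'` : performing the single operation `op` on `G`
yields `G'`; vertex splittings are allowed on side `A` (resp. `B`) only if
`sA` (resp. `sB`) is `true`.  A copy created by a splitting is put on the
same side as the split vertex. -/
inductive OpStep (sA sB : Bool) : Op → BGraph → BGraph → Prop where
  | del {G G' : BGraph} {u v : ℕ}
      (h : G.Adj u v) (hA : G'.A = G.A) (hB : G'.B = G.B)
      (hadj : ∀ x y, G'.Adj x y ↔
        (G.Adj x y ∧ ¬((x = u ∧ y = v) ∨ (x = v ∧ y = u)))) :
      OpStep sA sB (Op.del u v) G G'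
  | add {G G' : BGraph} {u v : ℕ}
      (hu : u ∈ G.A) (hv : v ∈ G.B) (h : ¬ G.Adj u v)
      (hA : G'.A = G.A) (hB : G'.B = G.B)
      (hadj : ∀ x y, G'.Adj x y ↔
        (G.Adj x y ∨ (x = u ∧ y = v) ∨ (x = v ∧ y = u))) :
      OpStep sA sB (Op.add u v) G G'
  | split {G G' : BGraph} {v v' : ℕ} {N1 N2 : Set ℕ}
      (hside : (v ∈ G.A ∧ sA = true) ∨ (v ∈ G.B ∧ sB = true))
      (hfresh : v' ∉ verts G)
      (hcover : N1 ∪ N2 = nbhd G v)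
      (hA : v ∈ G.A → G'.A = insert v' G.A ∧ G'.B = G.B)
      (hB : v ∈ G.B → G'.A = G.A ∧ G'.B = insert v' G.B)
      (hadj : ∀ x y, G'.Adj x y ↔
        ((G.Adj x y ∧ x ≠ v ∧ y ≠ v) ∨ (x = v ∧ y ∈ N1) ∨ (y = v ∧ x ∈ N1) ∨
          (x = v' ∧ y ∈ N2) ∨ (y = v' ∧ x ∈ N2))) :
      OpStep sA sB (Op.split v v' N1 N2) G G'

/-- `ApplySeq sA sB L G G'` : applying the sequence of operations `L`
to `G` yields `G'`. -/
def ApplySeq (sA sB : Bool) : List Op → BGraph → BGraph → Prop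
  | [], G, G' => G' = G
  | op :: L, G, G'' => ∃ G', OpStep sA sB op G G' ∧ ApplySeq sA sB L G' G''

/-- The sequence `L` transforms `G` into a disjoint union of bicliques. -/
def Solves (sA sB : Bool) (L : List Op) (G : BGraph) : Prop :=
  ∃ G', ApplySeq sA sB L G G' ∧ IsBicliqueUnion G'

/-- `bcevs G` : the minimum length of a sequence of edge editions and vertex
splittings transforming `G` into a disjoint union of bicliques. -/
noncomputable def bcevs (G : BGraph) : ℕ :=
  sInf {n | ∃ L, L.length = n ∧ Solves true true L G}

/-- `bceovs G` (that is, `bceovs(G, A)`) : the minimum length of such a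
sequence in which vertex splittings are applied only to vertices of the side
`A` (and their copies, which are also on side `A`). -/
noncomputable def bceovs (G : BGraph) : ℕ :=
  sInf {n | ∃ L, L.length = n ∧ Solves true false L G}

/-- The subgraph of `G` induced by `S`. -/
def induce (G : BGraph) (S : Set ℕ) : BGraph where
  A := G.A ∩ S
  B := G.B ∩ S
  finA := G.finA.subset Set.inter_subset_left
  finB := G.finB.subset Set.inter_subset_left
  Adj := fun u v => G.Adj u v ∧ u ∈ S ∧ v ∈ S
  symm := fun u v h => ⟨G.symm u v h.1, h.2.2, h.2.1⟩

/-- `G` is a tree (as an abstract graph on its vertex set). -/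
def IsTreeB (G : BGraph) : Prop :=
  (SimpleGraph.induce (verts G) (SimpleGraph.fromRel G.Adj)).IsTree

/-- `G` is connected. -/
def ConnectedB (G : BGraph) : Prop :=
  (SimpleGraph.induce (verts G) (SimpleGraph.fromRel G.Adj)).Connected

/-- The set `S` induces a biclique in `G`: every vertex of `S` on side `A` is
adjacent to every vertex of `S` on side `B`. -/
def IsBicliqueOn (G : BGraph) (S : Set ℕ) : Prop :=
  ∀ u ∈ S ∩ G.A, ∀ v ∈ S ∩ G.B, G.Adj u v

/-- The set `S` induces a star in `G`: some centre `c ∈ S` is adjacent to all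
other vertices of `S`, and every edge inside `S` uses the centre. -/
def IsStarOn (G : BGraph) (S : Set ℕ) : Prop :=
  ∃ c ∈ S, (∀ v ∈ S, v ≠ c → G.Adj c v) ∧
    (∀ u ∈ S, ∀ v ∈ S, G.Adj u v → u = c ∨ v = c)

/-- An `A`-partitioning cover of `G`: a collection of subsets of `A ∪ B`
covering all vertices whose traces on `A` form a partition of `A` (every
vertex of `A` lies in a unique member of the collection). -/
def IsAPartCover (G : BGraph) (C : Set (Set ℕ)) : Prop :=
  (∀ X ∈ C, X ⊆ verts G) ∧
  (∀ v ∈ verts G, ∃ X ∈ C, v ∈ X) ∧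
  (∀ a ∈ G.A, ∃! X, X ∈ C ∧ a ∈ X)

/-- The cost of an `A`-partitioning cover: each `a ∈ A` lying in the unique
set `X ∈ C` costs `|(B ∩ X) \ N(a)| + |N(a) \ X|`; each `b ∈ B` lying in `j`
members of `C` costs `j - 1`. -/
noncomputable def coverCost (G : BGraph) (C : Set (Set ℕ)) : ℕ :=
  (∑ᶠ a ∈ G.A, ∑ᶠ X ∈ {X ∈ C | a ∈ X},
      (((G.B ∩ X) \ nbhd G a).ncard + ((nbhd G a) \ X).ncard)) +
  ∑ᶠ b ∈ G.B, ({X ∈ C | b ∈ X}.ncard - 1)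

/-- The twin class of a vertex: all vertices of `G` with the same open
neighbourhood. -/
def twinClass (G : BGraph) (v : ℕ) : Set ℕ :=
  {u ∈ verts G | nbhd G u = nbhd G v}

/-- The twin classes of `G`. -/
def twinClasses (G : BGraph) : Set (Set ℕ) :=
  {T | ∃ v ∈ verts G, T = twinClass G v}

/-- A cover is twin-adapted if every member contains each twin class either
entirely or not at all. -/
def TwinAdapted (G : BGraph) (C : Set (Set ℕ)) : Prop :=
  ∀ T ∈ twinClasses G, ∀ X ∈ C, T ∩ X = ∅ ∨ T ⊆ X

/-- `G` is a cycle with consecutive vertices `p 0, p 1, …, p (m-1)`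
(indices modulo `m`), the vertices of even index forming side `A`. -/
def IsCycleWith (G : BGraph) (p : ℕ → ℕ) (m : ℕ) : Prop :=
  (∀ i j, i < m → j < m → p i = p j → i = j) ∧
  G.A = p '' {i | i < m ∧ i % 2 = 0} ∧
  G.B = p '' {i | i < m ∧ i % 2 = 1} ∧
  (∀ x y, G.Adj x y ↔ ∃ i < m,
    (x = p i ∧ y = p ((i + 1) % m)) ∨ (y = p i ∧ x = p ((i + 1) % m)))

/-- `G` is a path with `l` edges and consecutive vertices `p 0, …, p l`,
the vertices of even index forming side `A`. -/
def IsPathWith (G : BGraph) (p : ℕ → ℕ) (l : ℕ) : Prop :=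
  (∀ i j, i ≤ l → j ≤ l → p i = p j → i = j) ∧
  G.A = p '' {i | i ≤ l ∧ i % 2 = 0} ∧
  G.B = p '' {i | i ≤ l ∧ i % 2 = 1} ∧
  (∀ x y, G.Adj x y ↔ ∃ i < l,
    (x = p i ∧ y = p (i + 1)) ∨ (y = p i ∧ x = p (i + 1)))

end BCE

/-!
Call the number of splits of a vertex `b ∈ B` plus the number of edited pairs `ab` the weight of
`b`; the weights of the vertices of `B` add up to the cost of the cover. The neighbourhood of a
vertex of weight zero is the trace on `A` of the cluster of any of its neighbours. If `G` is
connected and the vertices of `B` are not all twins, then two steps away from a vertex `b` of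
weight zero, via some `a ∈ A`, there is a vertex `d` which is not a twin of `b`. This `d` has
positive weight, since otherwise the neighbourhoods of `b` and `d` would both be the trace of the
cluster of `a`. That cluster contains `d`, unless the pair `ad` is edited, so given `d` there are at
most `weight d + 1` possibilities for it. Adding the neighbourhood of `d` itself, each `d` of
positive weight accounts for at most `weight d + 2 ≤ 3 * weight d` neighbourhoods.
-/

namespace BCE

section

variable {G : BGraph} {C : Set (Set ℕ)} {a b d u v : ℕ}

lemma Bipartite.mem_A_of_adj (hG : Bipartite G) (hb : b ∈ G.B) (h : G.Adj b a) : a ∈ G.A :=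
  (hG.2 b a h).elim (fun h' => absurd hb (hG.1.notMem_of_mem_left h'.1)) And.right

lemma Bipartite.mem_B_of_adj (hG : Bipartite G) (ha : a ∈ G.A) (h : G.Adj a b) : b ∈ G.B :=
  (hG.2 a b h).elim And.right fun h' => absurd h'.1 (hG.1.notMem_of_mem_left ha)

lemma Bipartite.not_adj_of_mem_B (hG : Bipartite G) (hb : b ∈ G.B) (hd : d ∈ G.B) :
    ¬ G.Adj b d :=
  fun h => hG.1.notMem_of_mem_left (hG.mem_A_of_adj hb h) hd

lemma ConnectedB.exists_boundary_adj (hG : ConnectedB G) {S : Set ℕ} (hu : u ∈ verts G)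
    (hv : v ∈ verts G) (huS : u ∈ S) (hvS : v ∉ S) : ∃ x ∈ S, ∃ y ∉ S, G.Adj x y := by
  obtain ⟨p⟩ := hG.preconnected ⟨u, hu⟩ ⟨v, hv⟩
  obtain ⟨⟨⟨x, y⟩, hxy⟩, -, hx, hy⟩ := p.exists_boundary_dart (Subtype.val ⁻¹' S) huS hvS
  exact ⟨x, hx, y, hy, hxy.2.elim id (G.symm _ _)⟩

lemma ConnectedB.exists_adj_adj_nbhd_ne (hG : ConnectedB G) (hu : u ∈ verts G)
    (hv : v ∈ verts G) (huv : ¬ G.Adj u v) (hne : nbhd G v ≠ nbhd G u) :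
    ∃ x y, G.Adj u x ∧ G.Adj x y ∧ nbhd G y ≠ nbhd G u := by
  obtain ⟨x, hx, y, hy, hxy⟩ := hG.exists_boundary_adj
    (S := nbhd G u ∪ {w | nbhd G w = nbhd G u}) hu hv (Or.inr rfl) (not_or.2 ⟨huv, hne⟩)
  obtain ⟨hyu, hyne⟩ := not_or.1 hy
  rcases hx with hux | hxu
  · exact ⟨x, y, hux, hxy, hyne⟩
  · exact absurd (hxu.subset hxy) hyu

/-- The cluster of `a`: the member of the cover `C` containing `a`. It is written as a union so
that no choice is needed; this is the intended set when exactly one member contains `a`, as is the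
case for `a ∈ A`. -/
def cluster (C : Set (Set ℕ)) (a : ℕ) : Set ℕ := ⋃₀ {X ∈ C | a ∈ X}

/-- The pair `ab` is edited: it is an edge between different clusters or a non-edge inside one. -/
def IsEdited (G : BGraph) (C : Set (Set ℕ)) (a b : ℕ) : Prop :=
  ¬ (b ∈ cluster C a ↔ G.Adj a b)

/-- The vertices of `A` whose pair with `b` is edited. -/
def editedAt (G : BGraph) (C : Set (Set ℕ)) (b : ℕ) : Set ℕ := {a ∈ G.A | IsEdited G C a b}

/-- The weight of `b ∈ B`: its contribution to the cost of `C`, when the cost of an edited pair is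
charged to its endpoint in `B`. -/
noncomputable def weight (G : BGraph) (C : Set (Set ℕ)) (b : ℕ) : ℕ :=
  ({X ∈ C | b ∈ X}.ncard - 1) + (editedAt G C b).ncard

/-- The clusters near `b`: those containing `b` or a vertex whose pair with `b` is edited. -/
def nearbyClusters (G : BGraph) (C : Set (Set ℕ)) (b : ℕ) : Set (Set ℕ) :=
  {X ∈ C | b ∈ X} ∪ cluster C '' editedAt G C b

/-- The neighbourhood of `b` and the traces on `A` of the clusters near `b`: the neighbourhoods
that `b` accounts for in the count of twin classes. -/
def nearbyTraces (G : BGraph) (C : Set (Set ℕ)) (b : ℕ) : Set (Set ℕ) :=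
  insert (nbhd G b) ((· ∩ G.A) '' nearbyClusters G C b)

lemma IsAPartCover.finite (hC : IsAPartCover G C) : C.Finite :=
  (G.finA.union G.finB).finite_subsets.subset hC.1

lemma IsAPartCover.setOf_mem_eq_singleton (hC : IsAPartCover G C) (ha : a ∈ G.A) :
    {X ∈ C | a ∈ X} = {cluster C a} := by
  obtain ⟨X, hX, huniq⟩ := hC.2.2 a ha
  have hsingle : {Y ∈ C | a ∈ Y} = {X} := Set.eq_singleton_iff_unique_mem.2 ⟨hX, huniq⟩
  rw [cluster, hsingle, Set.sUnion_singleton]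

lemma IsAPartCover.mem_and_mem_iff (hC : IsAPartCover G C) (ha : a ∈ G.A) {X : Set ℕ} :
    X ∈ C ∧ a ∈ X ↔ X = cluster C a :=
  Set.ext_iff.1 (hC.setOf_mem_eq_singleton ha) X

lemma finite_editedAt (G : BGraph) (C : Set (Set ℕ)) (b : ℕ) : (editedAt G C b).Finite :=
  G.finA.subset (Set.sep_subset _ _)

lemma ncard_sdiff_add_ncard_sdiff_eq (hG : Bipartite G) (ha : a ∈ G.A) :
    ((G.B ∩ cluster C a) \ nbhd G a).ncard + (nbhd G a \ cluster C a).ncard =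
      {b ∈ G.B | IsEdited G C a b}.ncard := by
  have hN : nbhd G a ⊆ G.B := fun b hb => hG.mem_B_of_adj ha hb
  have hdisj : Disjoint ((G.B ∩ cluster C a) \ nbhd G a) (nbhd G a \ cluster C a) :=
    Set.disjoint_sdiff_left.mono_right Set.sdiff_subset
  rw [← Set.ncard_union_eq hdisj (G.finB.inter_of_left _).sdiff (G.finB.subset hN).sdiff]
  congr 1
  ext b
  have hb : G.Adj a b → b ∈ G.B := fun h => hN h
  simp only [IsEdited, nbhd, Set.mem_union, Set.mem_sdiff, Set.mem_inter_iff, Set.mem_ofPred_eq]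
  tauto

lemma sum_ncard_isEdited_eq_sum_ncard_editedAt (G : BGraph) (C : Set (Set ℕ)) :
    ∑ a ∈ G.finA.toFinset, {b ∈ G.B | IsEdited G C a b}.ncard =
      ∑ b ∈ G.finB.toFinset, (editedAt G C b).ncard := by
  classical
  convert Finset.sum_card_bipartiteAbove_eq_sum_card_bipartiteBelow (IsEdited G C)
    (s := G.finA.toFinset) (t := G.finB.toFinset) using 2 <;>
  · rw [← Set.ncard_coe_finset]
    simp [Finset.bipartiteAbove, Finset.bipartiteBelow, editedAt]

lemma coverCost_eq_sum_weight (hG : Bipartite G) (hC : IsAPartCover G C) :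
    coverCost G C = ∑ b ∈ G.finB.toFinset, weight G C b := by
  have hcostA : ∀ a ∈ G.finA.toFinset,
      ∑ᶠ X ∈ {X ∈ C | a ∈ X}, (((G.B ∩ X) \ nbhd G a).ncard + (nbhd G a \ X).ncard) =
        {b ∈ G.B | IsEdited G C a b}.ncard := by
    intro a ha
    rw [Set.Finite.mem_toFinset] at ha
    rw [hC.setOf_mem_eq_singleton ha, finsum_mem_singleton, ncard_sdiff_add_ncard_sdiff_eq hG ha]
  simp only [coverCost, weight, finsum_mem_eq_finite_toFinset_sum _ G.finA,
    finsum_mem_eq_finite_toFinset_sum _ G.finB, Finset.sum_add_distrib]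
  rw [Finset.sum_congr rfl hcostA, sum_ncard_isEdited_eq_sum_ncard_editedAt, add_comm]

lemma ncard_nearbyClusters_le (G : BGraph) (C : Set (Set ℕ)) (b : ℕ) :
    (nearbyClusters G C b).ncard ≤ weight G C b + 1 := by
  have hunion := Set.ncard_union_le {X ∈ C | b ∈ X} (cluster C '' editedAt G C b)
  have himage := Set.ncard_image_le (f := cluster C) (finite_editedAt G C b)
  unfold nearbyClusters weight
  omega

lemma IsAPartCover.finite_nearbyClusters (hC : IsAPartCover G C) (b : ℕ) :
    (nearbyClusters G C b).Finite :=
  (hC.finite.subset (Set.sep_subset _ _)).union ((finite_editedAt G C b).image _)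

lemma IsAPartCover.finite_nearbyTraces (hC : IsAPartCover G C) (b : ℕ) :
    (nearbyTraces G C b).Finite :=
  ((hC.finite_nearbyClusters b).image _).insert _

lemma IsAPartCover.ncard_nearbyTraces_le (hC : IsAPartCover G C) (b : ℕ) :
    (nearbyTraces G C b).ncard ≤ weight G C b + 2 :=
  calc (nearbyTraces G C b).ncard
    _ ≤ ((· ∩ G.A) '' nearbyClusters G C b).ncard + 1 := Set.ncard_insert_le _ _
    _ ≤ (nearbyClusters G C b).ncard + 1 :=
      Nat.add_le_add_right (Set.ncard_image_le (hC.finite_nearbyClusters b)) 1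
    _ ≤ weight G C b + 2 := Nat.add_le_add_right (ncard_nearbyClusters_le G C b) 1

lemma IsAPartCover.cluster_mem_nearbyClusters (hC : IsAPartCover G C) (ha : a ∈ G.A)
    (h : G.Adj a b) : cluster C a ∈ nearbyClusters G C b := by
  by_cases hb : b ∈ cluster C a
  · exact Or.inl ⟨((hC.mem_and_mem_iff ha).2 rfl).1, hb⟩
  · exact Or.inr (Set.mem_image_of_mem _ ⟨ha, fun hiff => hb (hiff.2 h)⟩)

lemma IsAPartCover.eq_of_weight_eq_zero (hC : IsAPartCover G C) (hb : weight G C b = 0)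
    {X Y : Set ℕ} (hX : X ∈ C) (hbX : b ∈ X) (hY : Y ∈ C) (hbY : b ∈ Y) : X = Y :=
  (Set.ncard_le_one (hC.finite.subset (Set.sep_subset _ _))).1
    (Nat.sub_eq_zero_iff_le.1 (Nat.add_eq_zero_iff.1 hb).1) X ⟨hX, hbX⟩ Y ⟨hY, hbY⟩

lemma mem_cluster_iff_adj_of_weight_eq_zero (hb : weight G C b = 0) (ha : a ∈ G.A) :
    b ∈ cluster C a ↔ G.Adj a b := by
  have hempty : editedAt G C b = ∅ :=
    (Set.ncard_eq_zero (finite_editedAt G C b)).1 (Nat.add_eq_zero_iff.1 hb).2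
  exact not_not.1 fun h => hempty.subset ⟨ha, h⟩

lemma IsAPartCover.nbhd_eq_cluster_inter (hC : IsAPartCover G C) (hG : Bipartite G)
    (hb : b ∈ G.B) (hb0 : weight G C b = 0) (hba : G.Adj b a) :
    nbhd G b = cluster C a ∩ G.A := by
  have hA : ∀ x, G.Adj b x → x ∈ G.A := fun x => hG.mem_A_of_adj hb
  have hmem : ∀ x ∈ G.A, cluster C x ∈ C ∧ x ∈ cluster C x :=
    fun x hx => (hC.mem_and_mem_iff hx).2 rfl
  have hcluster : ∀ x, G.Adj b x → b ∈ cluster C x := fun x hbx =>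
    (mem_cluster_iff_adj_of_weight_eq_zero hb0 (hA x hbx)).2 (G.symm _ _ hbx)
  ext x
  constructor
  · intro hbx
    have heq : cluster C x = cluster C a := hC.eq_of_weight_eq_zero hb0
      (hmem x (hA x hbx)).1 (hcluster x hbx) (hmem a (hA a hba)).1 (hcluster a hba)
    exact ⟨heq ▸ (hmem x (hA x hbx)).2, hA x hbx⟩
  · rintro ⟨hxa, hx⟩
    have heq : cluster C a = cluster C x :=
      (hC.mem_and_mem_iff hx).1 ⟨(hmem a (hA a hba)).1, hxa⟩
    exact G.symm _ _ ((mem_cluster_iff_adj_of_weight_eq_zero hb0 hx).1 (heq ▸ hcluster a hba))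

lemma IsAPartCover.exists_weight_pos_nbhd_mem_nearbyTraces (hC : IsAPartCover G C)
    (hG : Bipartite G) (hconn : ConnectedB G) (hne : (nbhd G '' G.B).Nontrivial) (hb : b ∈ G.B) :
    ∃ d ∈ G.B, 0 < weight G C d ∧ nbhd G b ∈ nearbyTraces G C d := by
  rcases Nat.eq_zero_or_pos (weight G C b) with hb0 | hbpos
  · obtain ⟨_, ⟨c, hc, rfl⟩, hcb⟩ := hne.exists_ne (nbhd G b)
    obtain ⟨a, d, hba, had, hdb⟩ := hconn.exists_adj_adj_nbhd_ne (Or.inr hb) (Or.inr hc)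
      (hG.not_adj_of_mem_B hb hc) hcb
    have ha := hG.mem_A_of_adj hb hba
    have hd := hG.mem_B_of_adj ha had
    have hNb := hC.nbhd_eq_cluster_inter hG hb hb0 hba
    refine ⟨d, hd, Nat.pos_of_ne_zero fun hd0 => hdb ?_, ?_⟩
    · rw [hNb, hC.nbhd_eq_cluster_inter hG hd hd0 (G.symm _ _ had)]
    · rw [hNb]
      exact Or.inr (Set.mem_image_of_mem _ (hC.cluster_mem_nearbyClusters ha had))
  · exact ⟨b, hb, hbpos, Set.mem_insert _ _⟩

lemma IsAPartCover.ncard_nbhd_image_le_of_nontrivial (hC : IsAPartCover G C) (hG : Bipartite G)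
    (hconn : ConnectedB G) (hne : (nbhd G '' G.B).Nontrivial) :
    (nbhd G '' G.B).ncard ≤ 3 * coverCost G C := by
  set D := {d ∈ G.finB.toFinset | 0 < weight G C d} with hD
  have hcover : nbhd G '' G.B ⊆ ⋃ d ∈ D, nearbyTraces G C d := by
    rintro _ ⟨b, hb, rfl⟩
    obtain ⟨d, hd, hpos, hmem⟩ := hC.exists_weight_pos_nbhd_mem_nearbyTraces hG hconn hne hb
    exact Set.mem_biUnion (by simp [hD, hd, hpos]) hmem
  calc (nbhd G '' G.B).ncard
    _ ≤ (⋃ d ∈ D, nearbyTraces G C d).ncard := Set.ncard_le_ncard hcover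
      (D.finite_toSet.biUnion fun d _ => hC.finite_nearbyTraces d)
    _ ≤ ∑ d ∈ D, (nearbyTraces G C d).ncard := D.set_ncard_biUnion_le _
    _ ≤ ∑ d ∈ D, 3 * weight G C d := Finset.sum_le_sum fun d hd => by
      have hpos := (Finset.mem_filter.1 hd).2
      have hcard := hC.ncard_nearbyTraces_le d
      omega
    _ ≤ ∑ d ∈ G.finB.toFinset, 3 * weight G C d :=
      Finset.sum_le_sum_of_subset (Finset.filter_subset _ _)
    _ = 3 * coverCost G C := by rw [← Finset.mul_sum, coverCost_eq_sum_weight hG hC]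

lemma ncard_twinClasses_subset_B_le (G : BGraph) :
    {T ∈ twinClasses G | T ⊆ G.B}.ncard ≤ (nbhd G '' G.B).ncard := by
  have hfin := G.finB.image (nbhd G)
  have hsub : {T ∈ twinClasses G | T ⊆ G.B} ⊆
      (fun N => {u ∈ verts G | nbhd G u = N}) '' (nbhd G '' G.B) := by
    rintro _ ⟨⟨v, hv, rfl⟩, hT⟩
    exact ⟨nbhd G v, Set.mem_image_of_mem _ (hT ⟨hv, rfl⟩), rfl⟩
  exact (Set.ncard_le_ncard hsub (hfin.image _)).trans (Set.ncard_image_le hfin)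

theorem b_twin_classes_bound_general (hG : Bipartite G) (hconn : ConnectedB G)
    (hC : IsAPartCover G C) :
    {T ∈ twinClasses G | T ⊆ G.B}.ncard ≤ max 1 (3 * coverCost G C) := by
  refine (ncard_twinClasses_subset_B_le G).trans ?_
  rcases (nbhd G '' G.B).subsingleton_or_nontrivial with hsub | hne
  · exact le_max_of_le_left ((Set.ncard_le_one hsub.finite).2 fun _ hM _ hN => hsub hM hN)
  · exact le_max_of_le_right (hC.ncard_nbhd_image_le_of_nontrivial hG hconn hne)

end

/-- Let `k ≥ 1` and let `G = (A, B, E)` be a connected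
bipartite graph all of whose twin classes have size at most `k`, having a
twin-adapted `A`-partitioning cover of cost at most `k`.  Then `G` has at
most `4k⁴` twin classes contained in `B`. -/
theorem b_twin_classes_bound (G : BGraph) (hbip : Bipartite G)
    (hconn : ConnectedB G) (k : ℕ) (hk : 1 ≤ k)
    (hsize : ∀ T ∈ twinClasses G, T.ncard ≤ k)
    (hcov : ∃ C, IsAPartCover G C ∧ TwinAdapted G C ∧ coverCost G C ≤ k) :
    {T ∈ twinClasses G | T ⊆ G.B}.ncard ≤ 4 * k ^ 4 := by
  obtain ⟨C, hC, -, hcost⟩ := hcov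
  have hbound := b_twin_classes_bound_general hbip hconn hC
  have hpow : k ≤ k ^ 4 := Nat.le_self_pow four_ne_zero k
  omega

end BCE
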